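/- arXiv:2009.02477 — 3 statements merged into one kernel-verified Lean document; each statement's English description precedes it below -/
import Mathlib

section
/- An element a of a complex unital Banach algebra A has a g-Drazin inverse if and only if there exists an idempotent e commuting with a such that eae is invertible in the corner algebra eAe (with identity e) and (1−e)a(1−e) is quasinilpotent in the corner algebra (1−e)A(1−e) (with identity 1−e). -/
open Filter Finset

/-- An element of a complex (Banach) algebra is quasinilpotent if its spectral radius is zero. -/
noncomputable def Quasinilpotent {A : Type*} [Ring A] [Algebra ℂ A] (q : A) : Prop :=
  spectralRadius ℂ q = 0

/-- `a` has a generalized Drazin inverse: some `b` with `ab = ba`, `b = bab`,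
and `a - a²b` quasinilpotent. -/
noncomputable def HasGDrazin {A : Type*} [Ring A] [Algebra ℂ A] (a : A) : Prop :=
  ∃ b : A, a * b = b * a ∧ b = b * a * b ∧ Quasinilpotent (a - a ^ 2 * b)

/-!
The outer inverses `b` of `a` commuting with `a` are exactly the inverses of `e * a * e` in the
corners at idempotents `e` commuting with `a`, and `b` determines `e = a * b`. The complementary
corner then carries `(1 - e) * a * (1 - e) = a - a ^ 2 * b`, whose spectral radius vanishes, by
Gelfand's formula, if and only if the `n`-th roots of the norms of its powers tend to zero.
-/

/-- `b` is an outer inverse of `a` commuting with `a`. This is the algebraic part of the notion of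
a g-Drazin inverse; the equation is oriented as in `HasGDrazin`. -/
structure IsCommutingOuterInverse {S : Type*} [Mul S] (a b : S) : Prop where
  commute : Commute a b
  eq_mul_mul : b = b * a * b

/-- `y` is an inverse of `x` in the corner `e S e`, whose unit is the idempotent `e`. Membership of
`y` in the corner is expressed by the equation `y = e * y * e`. -/
structure IsCornerInverse {S : Type*} [Mul S] (e x y : S) : Prop where
  mem_corner : y = e * y * e
  right_inv : x * y = e
  left_inv : y * x = e

section Semigroup

variable {S : Type*} [Semigroup S] {a b e x y : S}

theorem mul_mul_self_eq_mul_of_commute (he : IsIdempotentElem e) (hc : Commute a e) :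
    e * a * e = a * e := by
  rw [← hc.eq, he.mul_mul_self]

namespace IsCommutingOuterInverse

theorem isIdempotentElem_mul (h : IsCommutingOuterInverse a b) : IsIdempotentElem (a * b) :=
  calc
    a * b * (a * b) = a * (b * a * b) := by simp only [mul_assoc]
    _ = a * b := by rw [← h.eq_mul_mul]

theorem commute_mul (h : IsCommutingOuterInverse a b) : Commute a (a * b) :=
  (Commute.refl a).mul_right h.commute

theorem mul_mul_right_self (h : IsCommutingOuterInverse a b) : a * b * b = b := by
  rw [h.commute.eq, ← h.eq_mul_mul]

theorem right_mul_mul_self (h : IsCommutingOuterInverse a b) : b * (a * b) = b := by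
  rw [← mul_assoc, ← h.eq_mul_mul]

theorem isCornerInverse (h : IsCommutingOuterInverse a b) :
    IsCornerInverse (a * b) (a * b * a * (a * b)) b := by
  have corner_eq : a * b * a * (a * b) = a * (a * b) :=
    mul_mul_self_eq_mul_of_commute h.isIdempotentElem_mul h.commute_mul
  refine ⟨?_, ?_, ?_⟩
  · rw [h.mul_mul_right_self, h.right_mul_mul_self]
  · rw [corner_eq, mul_assoc, h.mul_mul_right_self]
  · rw [corner_eq, h.commute_mul.eq, ← mul_assoc, h.right_mul_mul_self, h.commute.eq]

end IsCommutingOuterInverse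

namespace IsCornerInverse

theorem unit_mul (h : IsCornerInverse e x y) (he : IsIdempotentElem e) : e * y = y := by
  rw [h.mem_corner, ← mul_assoc, he.mul_self_mul]

theorem mul_unit (h : IsCornerInverse e x y) (he : IsIdempotentElem e) : y * e = y := by
  rw [h.mem_corner, he.mul_mul_self]

theorem right_inv_of_commute (h : IsCornerInverse e (e * a * e) y) (he : IsIdempotentElem e)
    (hc : Commute a e) : a * y = e :=
  calc
    a * y = a * e * y := by rw [mul_assoc, h.unit_mul he]
    _ = e * a * e * y := by rw [mul_mul_self_eq_mul_of_commute he hc]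
    _ = e := h.right_inv

theorem left_inv_of_commute (h : IsCornerInverse e (e * a * e) y) (he : IsIdempotentElem e)
    (hc : Commute a e) : y * a = e :=
  calc
    y * a = y * (a * e) := by rw [hc.eq, ← mul_assoc, h.mul_unit he]
    _ = y * (e * a * e) := by rw [mul_mul_self_eq_mul_of_commute he hc]
    _ = e := h.left_inv

theorem isCommutingOuterInverse (h : IsCornerInverse e (e * a * e) y) (he : IsIdempotentElem e)
    (hc : Commute a e) : IsCommutingOuterInverse a y where
  commute := (h.right_inv_of_commute he hc).trans (h.left_inv_of_commute he hc).symm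
  eq_mul_mul := by rw [h.left_inv_of_commute he hc, h.unit_mul he]

end IsCornerInverse

end Semigroup

theorem IsCommutingOuterInverse.one_sub_mul_mul_one_sub {R : Type*} [Ring R] {a b : R}
    (h : IsCommutingOuterInverse a b) :
    (1 - a * b) * a * (1 - a * b) = a - a ^ 2 * b :=
  calc
    (1 - a * b) * a * (1 - a * b) = a * (1 - a * b) :=
      mul_mul_self_eq_mul_of_commute h.isIdempotentElem_mul.one_sub
        ((Commute.one_right a).sub_right h.commute_mul)
    _ = a - a ^ 2 * b := by rw [mul_sub, mul_one, sq, mul_assoc]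

theorem tendsto_ennrealOfReal_zero_iff {ι : Type*} {l : Filter ι} {f : ι → ℝ}
    (hf : ∀ i, 0 ≤ f i) :
    Tendsto (fun i => ENNReal.ofReal (f i)) l (nhds 0) ↔ Tendsto f l (nhds 0) := by
  simpa only [ENNReal.toReal_ofReal (hf _)] using
    (ENNReal.tendsto_toReal_zero_iff fun i => ENNReal.ofReal_ne_top (r := f i)).symm

theorem quasinilpotent_iff_tendsto {A : Type*} [NormedRing A] [NormedAlgebra ℂ A]
    [CompleteSpace A] (q : A) :
    Quasinilpotent q ↔ Tendsto (fun n : ℕ => ‖q ^ n‖ ^ ((1 : ℝ) / n)) atTop (nhds 0) := by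
  have gelfand := spectrum.pow_norm_pow_one_div_tendsto_nhds_spectralRadius q
  rw [← tendsto_ennrealOfReal_zero_iff fun n => by positivity]
  exact ⟨fun hq => hq ▸ gelfand, tendsto_nhds_unique gelfand⟩

theorem stmt8 {A : Type*} [NormedRing A] [NormedAlgebra ℂ A] [CompleteSpace A] (a : A) :
    HasGDrazin a ↔ ∃ e : A, e * e = e ∧ a * e = e * a ∧
      (∃ y : A, y = e * y * e ∧ (e * a * e) * y = e ∧ y * (e * a * e) = e) ∧
      Tendsto (fun n : ℕ => ‖((1 - e) * a * (1 - e)) ^ n‖ ^ ((1 : ℝ) / n)) atTop (nhds 0) := by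
  simp only [← quasinilpotent_iff_tendsto]
  constructor
  · rintro ⟨b, hab, hb, hq⟩
    have h : IsCommutingOuterInverse a b := ⟨hab, hb⟩
    obtain ⟨hmem, hright, hleft⟩ := h.isCornerInverse
    rw [← h.one_sub_mul_mul_one_sub] at hq
    exact ⟨a * b, h.isIdempotentElem_mul, h.commute_mul, ⟨b, hmem, hright, hleft⟩, hq⟩
  · rintro ⟨e, he, hc, ⟨y, hmem, hright, hleft⟩, hq⟩
    have hy : IsCornerInverse e (e * a * e) y := ⟨hmem, hright, hleft⟩
    have h : IsCommutingOuterInverse a y := hy.isCommutingOuterInverse he hc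
    rw [← hy.right_inv_of_commute he hc, h.one_sub_mul_mul_one_sub] at hq
    exact ⟨y, h.commute, h.eq_mul_mul, hq⟩
end

section
/- Let A be a complex unital Banach algebra and a ∈ A. Then a has a g-Drazin inverse if and only if the 2×2 matrix [[1,1],[a,0]] over A has a g-Drazin inverse in M₂(A). -/
open Filter Finset

/-!
An element `x` has a g-Drazin inverse iff `0` is not an accumulation point of its spectrum
(Koliha). If `b` is a g-Drazin inverse of `x`, the identity
`(z - x) (1 - xb - zb) = (z - (x - x²b)) (1 - zb)` inverts `z - x` for small `z ≠ 0`. Conversely,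
let `p` be the Riesz projection of `x` on a small circle around `0` and `G` the Cauchy transform
of the resolvent along it: `(z - x) G z` is `1 - p` inside the circle and `-p` outside. On a
smaller circle `G` is `1 - p` times the resolvent, and it integrates to `0` by holomorphy, so
`(1 - p) p = 0`; the outer identity shows that `xp` is quasinilpotent, and `-G 0` yields the
inverse.

Up to invertible factors, `c - M` for `M = !![1, 1; a, 0]` is the diagonal matrix with entries
`c² - c - a` and `1`. Hence the spectrum of `M` is the preimage of that of `a` under
`c ↦ c² - c`, a local homeomorphism at `0`, so `0` is an accumulation point of both
spectra or of neither.
-/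

open Metric
open scoped Topology Real

section Algebraic

variable {A : Type*} [Ring A]

theorem quasinilpotent_iff_forall_isUnit [Algebra ℂ A] {q : A} :
    Quasinilpotent q ↔ ∀ z : ℂ, z ≠ 0 → IsUnit (algebraMap ℂ A z - q) := by
  simp only [Quasinilpotent, spectralRadius, ENNReal.iSup_eq_zero, spectrum.mem_iff,
    ENNReal.coe_eq_zero, nnnorm_eq_zero]
  exact forall_congr' fun z => by tauto

theorem hasGDrazin_of_isIdempotentElem_mul [Algebra ℂ A] {x b : A} (hxb : Commute x b)
    (hidem : IsIdempotentElem (x * b)) (hq : Quasinilpotent (x - x ^ 2 * b)) : HasGDrazin x := by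
  have hx : x * (b * (x * b)) = x * b := by rw [← mul_assoc, hidem.eq]
  have hcomm : Commute x (b * (x * b)) := hxb.mul_right ((Commute.refl x).mul_right hxb)
  refine ⟨b * (x * b), hcomm, ?_, ?_⟩
  · rw [mul_assoc _ x, hx, mul_assoc b, hidem.eq]
  · rwa [sq, mul_assoc, hx, ← mul_assoc, ← sq]

theorem isUnit_algebraMap_sub_mul_of_isIdempotentElem {𝕜 : Type*} [Field 𝕜] [Algebra 𝕜 A]
    {x p h : A} {z : 𝕜} (hz : z ≠ 0) (hp : IsIdempotentElem p) (hxh : Commute x h)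
    (hzh : (algebraMap 𝕜 A z - x) * h = p) : IsUnit (algebraMap 𝕜 A z - x * p) := by
  have hZ : ∀ y, Commute (algebraMap 𝕜 A z) y := Algebra.commute_algebraMap_left z
  have hxp : Commute x p := hzh ▸ ((hZ x).symm.sub_right (Commute.refl x)).mul_right hxh
  have hhp : Commute h p :=
    hzh ▸ ((hZ h).symm.sub_right hxh.symm).mul_right (Commute.refl h)
  have hon : (algebraMap 𝕜 A z - x * p) * (h * p) = p := by
    calc (algebraMap 𝕜 A z - x * p) * (h * p)
        = algebraMap 𝕜 A z * h * p - x * (p * h) * p := by noncomm_ring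
      _ = (algebraMap 𝕜 A z - x) * h * p := by
        rw [← hhp.eq, ← mul_assoc x, mul_assoc (x * h), hp.eq, ← sub_mul, ← sub_mul]
      _ = p := by rw [hzh, hp.eq]
  have hoff : (algebraMap 𝕜 A z - x * p) * (z⁻¹ • (1 - p)) = 1 - p := by
    rw [sub_mul, mul_smul_comm, mul_smul_comm, mul_assoc, hp.mul_one_sub_self, mul_zero,
      smul_zero, sub_zero, ← Algebra.smul_def, inv_smul_smul₀ hz]
  have hinv : (algebraMap 𝕜 A z - x * p) * (h * p + z⁻¹ • (1 - p)) = 1 := by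
    rw [mul_add, hon, hoff, add_sub_cancel]
  have hcomm : Commute (algebraMap 𝕜 A z - x * p) (h * p + z⁻¹ • (1 - p)) :=
    (hZ _).sub_left <| Commute.add_right
      ((hxh.mul_right hxp).mul_left (hhp.symm.mul_right (Commute.refl p)))
      (((Commute.one_right _).sub_right (hxp.mul_left (Commute.refl p))).smul_right _)
  exact (hcomm.isUnit_mul_iff.1 (by rw [hinv]; exact isUnit_one)).1

theorem algebraMap_sub_mul_one_sub_eq {R : Type*} [CommRing R] [Algebra R A] {x b : A}
    (hxb : Commute x b) (hb : b = b * x * b) (z : R) :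
    (algebraMap R A z - x) * (1 - x * b - algebraMap R A z * b) =
      (algebraMap R A z - (x - x ^ 2 * b)) * (1 - algebraMap R A z * b) := by
  have hxbb : x * b * b = b := by rw [hxb.eq, ← hb]
  have hcancel : x ^ 2 * b * (algebraMap R A z * b) = algebraMap R A z * (x * b) := by
    rw [Algebra.left_comm, sq, mul_assoc x, mul_assoc x, hxbb]
  calc (algebraMap R A z - x) * (1 - x * b - algebraMap R A z * b)
      = (algebraMap R A z - x) * (1 - algebraMap R A z * b) + x ^ 2 * b
          - algebraMap R A z * (x * b) := by noncomm_ring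
    _ = (algebraMap R A z - x) * (1 - algebraMap R A z * b) + x ^ 2 * b
          - x ^ 2 * b * (algebraMap R A z * b) := by rw [hcancel]
    _ = (algebraMap R A z - (x - x ^ 2 * b)) * (1 - algebraMap R A z * b) := by noncomm_ring

theorem commute_resolvent {R : Type*} [CommRing R] [Algebra R A] {x : A} {w : R}
    (hw : w ∈ resolventSet R x) : Commute x (resolvent x w) := by
  rw [spectrum.resolvent_eq hw]
  exact ((Algebra.commute_algebraMap_right w x).sub_right (Commute.refl x)).units_inv_right

theorem sub_mul_sub_inv_smul_resolvent {𝕜 : Type*} [Field 𝕜] [Algebra 𝕜 A] {x : A} {w z : 𝕜}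
    (hw : w ∈ resolventSet 𝕜 x) (hwz : w ≠ z) :
    (algebraMap 𝕜 A z - x) * ((w - z)⁻¹ • resolvent x w) = (w - z)⁻¹ • 1 - resolvent x w := by
  have hmul : (algebraMap 𝕜 A w - x) * resolvent x w = 1 := Ring.mul_inverse_cancel _ hw
  have hsplit : algebraMap 𝕜 A z - x = (algebraMap 𝕜 A w - x) - algebraMap 𝕜 A (w - z) := by
    rw [map_sub]; abel
  rw [hsplit, mul_smul_comm, sub_mul, hmul, ← Algebra.smul_def, smul_sub,
    inv_smul_smul₀ (sub_ne_zero.2 hwz)]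

end Algebraic

section CircleIntegral

variable {E F : Type*} [NormedAddCommGroup E] [NormedSpace ℂ E] [CompleteSpace E]
  [NormedAddCommGroup F] [NormedSpace ℂ F] [CompleteSpace F] {c : ℂ} {r : ℝ}

theorem circleIntegral_clm_comp_comm (L : E →L[ℂ] F) {f : ℂ → E} (hf : CircleIntegrable f c r) :
    ∮ z in C(c, r), L (f z) = L (∮ z in C(c, r), f z) := by
  simp only [circleIntegral, ← map_smul]
  exact L.intervalIntegral_comp_comm hf.out

theorem circleIntegral_sub_inv_of_notMem_closedBall {z : ℂ} (hr : 0 ≤ r)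
    (hz : z ∉ closedBall c r) : ∮ w in C(c, r), (w - z)⁻¹ = 0 := by
  refine DiffContOnCl.circleIntegral_eq_zero hr ?_
  refine (differentiable_id.sub_const z).diffContOnCl.inv fun w hw => sub_ne_zero.2 ?_
  rintro rfl
  exact hz (closure_ball_subset_closedBall hw)

variable {A : Type*} [NormedRing A] [NormedAlgebra ℂ A] [CompleteSpace A]

theorem circleIntegral_mul_left (y : A) {f : ℂ → A} (hf : CircleIntegrable f c r) :
    ∮ z in C(c, r), y * f z = y * ∮ z in C(c, r), f z :=
  circleIntegral_clm_comp_comm (ContinuousLinearMap.mul ℂ A y) hf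

theorem circleIntegral_mul_right (y : A) {f : ℂ → A} (hf : CircleIntegrable f c r) :
    ∮ z in C(c, r), f z * y = (∮ z in C(c, r), f z) * y :=
  circleIntegral_clm_comp_comm ((ContinuousLinearMap.mul ℂ A).flip y) hf

theorem commute_circleIntegral {y : A} {f : ℂ → A} (hr : 0 ≤ r) (hf : CircleIntegrable f c r)
    (hcomm : ∀ z ∈ sphere c r, Commute y (f z)) : Commute y (∮ z in C(c, r), f z) := by
  rw [commute_iff_eq, ← circleIntegral_mul_left y hf, ← circleIntegral_mul_right y hf]
  exact circleIntegral.integral_congr hr fun z hz => (hcomm z hz).eq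

end CircleIntegral

section Riesz

variable {A : Type*} [NormedRing A] [NormedAlgebra ℂ A] [CompleteSpace A]
  {x : A} {c z : ℂ} {r R : ℝ}

/-- The Riesz projection of `x` on the circle of centre `c` and radius `r`: the contour integral
that cuts out the part of the spectrum of `x` inside the circle. It is meaningful only when the
circle lies in the resolvent set, since `resolvent x` is `0` on the spectrum. -/
noncomputable def rieszProjection (x : A) (c : ℂ) (r : ℝ) : A :=
  (2 * π * Complex.I : ℂ)⁻¹ • ∮ w in C(c, r), resolvent x w

/-- The Cauchy transform of the resolvent of `x` along the circle of centre `c` and radius `r`.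
Inside the circle it inverts `z - x` on the range of `1 - rieszProjection x c r`, outside it
inverts `x - z` on the range of `rieszProjection x c r`. As for
`rieszProjection`, the circle should lie in the resolvent set. -/
noncomputable def resolventCauchyTransform (x : A) (c : ℂ) (r : ℝ) (z : ℂ) : A :=
  (2 * π * Complex.I : ℂ)⁻¹ • ∮ w in C(c, r), (w - z)⁻¹ • resolvent x w

theorem differentiableOn_resolvent (x : A) :
    DifferentiableOn ℂ (resolvent x) (resolventSet ℂ x) := fun _ hw =>
  (spectrum.hasDerivAt_resolvent_const_left hw).differentiableAt.differentiableWithinAt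

theorem circleIntegrable_resolvent (hr : 0 ≤ r) (hs : sphere c r ⊆ resolventSet ℂ x) :
    CircleIntegrable (resolvent x) c r :=
  ((differentiableOn_resolvent x).continuousOn.mono hs).circleIntegrable hr

theorem circleIntegrable_sub_inv_smul_resolvent (hr : 0 ≤ r)
    (hs : sphere c r ⊆ resolventSet ℂ x) (hz : z ∉ sphere c r) :
    CircleIntegrable (fun w => (w - z)⁻¹ • resolvent x w) c r := by
  refine ContinuousOn.circleIntegrable hr <| ContinuousOn.smul ?_
    ((differentiableOn_resolvent x).continuousOn.mono hs)
  exact (continuousOn_id.sub continuousOn_const).inv₀ fun w hw =>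
    sub_ne_zero.2 (ne_of_mem_of_not_mem hw hz)

theorem commute_resolventCauchyTransform (hr : 0 ≤ r) (hs : sphere c r ⊆ resolventSet ℂ x)
    (hz : z ∉ sphere c r) : Commute x (resolventCauchyTransform x c r z) :=
  (commute_circleIntegral hr (circleIntegrable_sub_inv_smul_resolvent hr hs hz)
    fun _ hw => (commute_resolvent (hs hw)).smul_right _).smul_right _

theorem sub_mul_resolventCauchyTransform (hr : 0 ≤ r) (hs : sphere c r ⊆ resolventSet ℂ x)
    (hz : z ∉ sphere c r) :
    (algebraMap ℂ A z - x) * resolventCauchyTransform x c r z =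
      ((2 * π * Complex.I : ℂ)⁻¹ * ∮ w in C(c, r), (w - z)⁻¹) • 1 - rieszProjection x c r := by
  have hinv : CircleIntegrable (fun w => (w - z)⁻¹ • (1 : A)) c r := by
    refine ContinuousOn.circleIntegrable hr <| ContinuousOn.smul ?_ continuousOn_const
    exact (continuousOn_id.sub continuousOn_const).inv₀ fun w hw =>
      sub_ne_zero.2 (ne_of_mem_of_not_mem hw hz)
  rw [resolventCauchyTransform, rieszProjection, mul_smul_comm,
    ← circleIntegral_mul_left _ (circleIntegrable_sub_inv_smul_resolvent hr hs hz),
    circleIntegral.integral_congr hr fun w hw =>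
      sub_mul_sub_inv_smul_resolvent (hs hw) (ne_of_mem_of_not_mem hw hz),
    circleIntegral.integral_sub hinv (circleIntegrable_resolvent hr hs),
    circleIntegral.integral_smul_const, smul_sub, smul_smul]

theorem sub_mul_resolventCauchyTransform_of_mem_ball (hs : sphere c r ⊆ resolventSet ℂ x)
    (hz : z ∈ ball c r) :
    (algebraMap ℂ A z - x) * resolventCauchyTransform x c r z = 1 - rieszProjection x c r := by
  rw [sub_mul_resolventCauchyTransform (pos_of_mem_ball hz).le hs
      fun h => (mem_ball.1 hz).ne (mem_sphere.1 h),
    circleIntegral.integral_sub_inv_of_mem_ball hz, inv_mul_cancel₀ Complex.two_pi_I_ne_zero,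
    one_smul]

theorem sub_mul_resolventCauchyTransform_of_notMem_closedBall (hr : 0 ≤ r)
    (hs : sphere c r ⊆ resolventSet ℂ x) (hz : z ∉ closedBall c r) :
    (algebraMap ℂ A z - x) * resolventCauchyTransform x c r z = -rieszProjection x c r := by
  rw [sub_mul_resolventCauchyTransform hr hs fun h => hz (sphere_subset_closedBall h),
    circleIntegral_sub_inv_of_notMem_closedBall hr hz, mul_zero, zero_smul, zero_sub]

theorem differentiableOn_resolventCauchyTransform (hr : 0 < r)
    (hs : sphere c r ⊆ resolventSet ℂ x) :
    DifferentiableOn ℂ (resolventCauchyTransform x c r) (ball c r) := by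
  lift r to NNReal using hr.le
  have h := (hasFPowerSeriesOn_cauchy_integral (circleIntegrable_resolvent hr.le hs)
    hr).differentiableOn
  rwa [Metric.eball_coe] at h

theorem sphere_subset_closedBall_diff_singleton (hr : 0 < r) (hrR : r ≤ R) :
    sphere c r ⊆ closedBall c R \ {c} := fun _ hw =>
  ⟨sphere_subset_closedBall.trans (closedBall_subset_closedBall hrR) hw,
    ne_of_mem_sphere hw hr.ne'⟩

theorem rieszProjection_eq_of_le (hr : 0 < r) (hrR : r ≤ R)
    (h : closedBall c R \ {c} ⊆ resolventSet ℂ x) :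
    rieszProjection x c R = rieszProjection x c r := by
  have hsub : closedBall c R \ ball c r ⊆ resolventSet ℂ x := fun w hw =>
    h ⟨hw.1, fun hwc => hw.2 (hwc ▸ mem_ball_self hr)⟩
  have hannulus : ball c R \ closedBall c r ⊆ resolventSet ℂ x :=
    (Set.sdiff_subset_sdiff ball_subset_closedBall ball_subset_closedBall).trans hsub
  rw [rieszProjection, rieszProjection,
    Complex.circleIntegral_eq_of_differentiable_on_annulus_off_countable hr hrR
      Set.countable_empty ((differentiableOn_resolvent x).continuousOn.mono hsub) fun w hw =>
      (spectrum.hasDerivAt_resolvent_const_left (hannulus hw.1)).differentiableAt]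

theorem isIdempotentElem_rieszProjection (hR : 0 < R)
    (h : closedBall c R \ {c} ⊆ resolventSet ℂ x) :
    IsIdempotentElem (rieszProjection x c R) := by
  obtain ⟨r, hr, hrR⟩ := exists_between hR
  have hsR := (sphere_subset_closedBall_diff_singleton hR le_rfl).trans h
  have hsr := (sphere_subset_closedBall_diff_singleton hr hrR.le).trans h
  have hG : ∀ w ∈ sphere c r, resolventCauchyTransform x c R w =
      (1 - rieszProjection x c R) * resolvent x w := fun w hw => by
    have hwR : w ∈ ball c R := mem_ball.2 (hw.trans_lt hrR)
    have hcomm : Commute (algebraMap ℂ A w - x) (resolventCauchyTransform x c R w) :=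
      (Algebra.commute_algebraMap_left w _).sub_left
        (commute_resolventCauchyTransform hR.le hsR fun h => (mem_ball.1 hwR).ne h)
    have hresolvent : (algebraMap ℂ A w - x) * resolvent x w = 1 :=
      Ring.mul_inverse_cancel _ (hsr hw)
    rw [← sub_mul_resolventCauchyTransform_of_mem_ball hsR hwR, hcomm.eq, mul_assoc,
      hresolvent, mul_one]
  have hzero : ∮ w in C(c, r), resolventCauchyTransform x c R w = 0 :=
    ((differentiableOn_resolventCauchyTransform hR hsR).diffContOnCl_ball
      (closedBall_subset_ball hrR)).circleIntegral_eq_zero hr.le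
  rw [circleIntegral.integral_congr hr.le hG,
    circleIntegral_mul_left _ (circleIntegrable_resolvent hr.le hsr)] at hzero
  have hproj : (1 - rieszProjection x c R) * rieszProjection x c r = 0 := by
    rw [rieszProjection.eq_def x c r, mul_smul_comm, hzero, smul_zero]
  rw [← rieszProjection_eq_of_le hr hrR.le h, sub_mul, one_mul, sub_eq_zero] at hproj
  exact hproj.symm

theorem quasinilpotent_mul_rieszProjection_zero (hR : 0 < R)
    (h : closedBall 0 R \ {0} ⊆ resolventSet ℂ x) :
    Quasinilpotent (x * rieszProjection x 0 R) := by
  refine quasinilpotent_iff_forall_isUnit.2 fun z hz => ?_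
  obtain ⟨r, hr, hrmin⟩ := exists_between (lt_min hR (norm_pos_iff.2 hz))
  obtain ⟨hrR, hrz⟩ := lt_min_iff.1 hrmin
  have hs := (sphere_subset_closedBall_diff_singleton hr hrR.le).trans h
  have hzr : z ∉ closedBall 0 r := by simpa using hrz
  have hcomm := commute_resolventCauchyTransform hr.le hs fun h => hzr (sphere_subset_closedBall h)
  refine isUnit_algebraMap_sub_mul_of_isIdempotentElem hz (isIdempotentElem_rieszProjection hR h)
    hcomm.neg_right ?_
  rw [mul_neg, sub_mul_resolventCauchyTransform_of_notMem_closedBall hr.le hs hzr, neg_neg,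
    rieszProjection_eq_of_le hr hrR.le h]

end Riesz

section Koliha

variable {A : Type*} [NormedRing A] [NormedAlgebra ℂ A] [CompleteSpace A] {x : A}

theorem HasGDrazin.eventually_mem_resolventSet (h : HasGDrazin x) :
    ∀ᶠ z in 𝓝[≠] (0 : ℂ), z ∈ resolventSet ℂ x := by
  obtain ⟨b, hxb, hb, hq⟩ := h
  have hlim : Tendsto (fun z : ℂ => 1 - algebraMap ℂ A z * b) (𝓝 0) (𝓝 1) := by
    refine Continuous.tendsto' (by fun_prop) _ _ ?_
    simp
  have hunit : ∀ᶠ z in 𝓝 (0 : ℂ), IsUnit (1 - algebraMap ℂ A z * b) :=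
    hlim.eventually (Units.isOpen.mem_nhds isUnit_one)
  filter_upwards [hunit.filter_mono nhdsWithin_le_nhds, self_mem_nhdsWithin] with z hz hz0
  have hcomm : Commute (algebraMap ℂ A z - x) (1 - x * b - algebraMap ℂ A z * b) := by
    have hxz : Commute x (algebraMap ℂ A z) := Algebra.commute_algebraMap_right z x
    refine (Algebra.commute_algebraMap_left z _).sub_left (Commute.sub_right ?_ ?_)
    · exact (Commute.one_right x).sub_right ((Commute.refl x).mul_right hxb)
    · exact hxz.mul_right hxb
  refine (hcomm.isUnit_mul_iff.1 ?_).1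
  rw [algebraMap_sub_mul_one_sub_eq hxb hb]
  exact (quasinilpotent_iff_forall_isUnit.1 hq z hz0).mul hz

theorem hasGDrazin_of_closedBall_diff_singleton_subset {R : ℝ} (hR : 0 < R)
    (h : closedBall 0 R \ {0} ⊆ resolventSet ℂ x) : HasGDrazin x := by
  have hs := (sphere_subset_closedBall_diff_singleton hR le_rfl).trans h
  have hxb : x * -resolventCauchyTransform x 0 R 0 = 1 - rieszProjection x 0 R := by
    simpa using sub_mul_resolventCauchyTransform_of_mem_ball hs (mem_ball_self hR)
  refine hasGDrazin_of_isIdempotentElem_mul (b := -resolventCauchyTransform x 0 R 0)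
    (commute_resolventCauchyTransform hR.le hs (by simpa using hR.ne)).neg_right ?_ ?_
  · rw [hxb]
    exact (isIdempotentElem_rieszProjection hR h).one_sub
  · rw [sq, mul_assoc, hxb, mul_sub, mul_one, sub_sub_cancel]
    exact quasinilpotent_mul_rieszProjection_zero hR h

theorem hasGDrazin_iff_eventually_mem_resolventSet :
    HasGDrazin x ↔ ∀ᶠ z in 𝓝[≠] (0 : ℂ), z ∈ resolventSet ℂ x := by
  refine ⟨HasGDrazin.eventually_mem_resolventSet, fun h => ?_⟩
  obtain ⟨R, hR, hball⟩ := (nhdsWithin_hasBasis nhds_basis_closedBall _).mem_iff.1 h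
  exact hasGDrazin_of_closedBall_diff_singleton_subset hR hball

end Koliha

theorem map_nhdsNE_eq_of_hasStrictDerivAt {𝕜 : Type*} [NontriviallyNormedField 𝕜]
    [CompleteSpace 𝕜] {f : 𝕜 → 𝕜} {f' a : 𝕜} (hf : HasStrictDerivAt f f' a) (hf' : f' ≠ 0) :
    Filter.map f (𝓝[≠] a) = 𝓝[≠] (f a) := by
  refine le_antisymm (hf.hasDerivAt.tendsto_nhdsNE hf') ?_
  rw [nhdsWithin, ← hf.map_nhds_eq hf', ← nhdsNE_sup_pure a, Filter.map_sup, Filter.map_pure,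
    inf_sup_right]
  refine sup_le inf_le_left ?_
  rw [← principal_singleton, inf_principal, Set.inter_compl_self, principal_empty]
  exact bot_le

section Matrix

theorem isUnit_fin_two_diagonal_one_iff {R : Type*} [Ring R] {d : R} :
    IsUnit (!![d, 0; 0, 1] : Matrix (Fin 2) (Fin 2) R) ↔ IsUnit d := by
  refine ⟨fun ⟨⟨_, N, hMN, hNM⟩, h⟩ => ?_, fun ⟨u, hu⟩ => ?_⟩
  · subst h
    exact ⟨⟨d, N 0 0, by simpa [Matrix.mul_apply] using congr_fun₂ hMN 0 0,
      by simpa [Matrix.mul_apply] using congr_fun₂ hNM 0 0⟩, rfl⟩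
  · subst hu
    exact ⟨⟨!![↑u, 0; 0, 1], !![↑u⁻¹, 0; 0, 1], by simp [Matrix.one_fin_two],
      by simp [Matrix.one_fin_two]⟩, rfl⟩

theorem isUnit_fin_two_sub_one_neg_one_neg_iff {R : Type*} [Ring R] (a c : R) :
    IsUnit (!![c - 1, -1; -a, c] : Matrix (Fin 2) (Fin 2) R) ↔ IsUnit (c ^ 2 - c - a) := by
  have hP : IsUnit (!![0, -1; 1, c] : Matrix (Fin 2) (Fin 2) R) :=
    ⟨⟨_, !![c, 1; -1, 0], by simp [Matrix.one_fin_two], by simp [Matrix.one_fin_two]⟩, rfl⟩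
  have hQ : IsUnit (!![1, 0; 1 - c, 1] : Matrix (Fin 2) (Fin 2) R) :=
    ⟨⟨_, !![1, 0; c - 1, 1], by simp [Matrix.one_fin_two], by simp [Matrix.one_fin_two]⟩, rfl⟩
  have hfactor : (!![c - 1, -1; -a, c] : Matrix (Fin 2) (Fin 2) R) =
      !![0, -1; 1, c] * !![c ^ 2 - c - a, 0; 0, 1] * !![1, 0; 1 - c, 1] := by
    simp only [Matrix.mul_fin_two]
    congr! 3
    all_goals noncomm_ring
  rw [hfactor, hQ.mul_right_iff, hP.mul_left_iff, isUnit_fin_two_diagonal_one_iff]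

theorem mem_resolventSet_fin_two_iff {R A : Type*} [CommRing R] [Ring A] [Algebra R A]
    {a : A} {c : R} :
    c ∈ resolventSet R (!![1, 1; a, 0] : Matrix (Fin 2) (Fin 2) A) ↔
      c ^ 2 - c ∈ resolventSet R a := by
  have hsub : algebraMap R (Matrix (Fin 2) (Fin 2) A) c - !![1, 1; a, 0] =
      !![algebraMap R A c - 1, -1; -a, algebraMap R A c] := by
    ext i j
    fin_cases i <;> fin_cases j <;> simp [Matrix.algebraMap_matrix_apply]
  rw [spectrum.mem_resolventSet_iff, spectrum.mem_resolventSet_iff, hsub,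
    isUnit_fin_two_sub_one_neg_one_neg_iff, map_sub, map_pow]

end Matrix

open scoped Matrix.Norms.Operator in
theorem hasGDrazin_matrix_iff_eventually_mem_resolventSet {n A : Type*} [Fintype n] [DecidableEq n]
    [NormedRing A] [NormedAlgebra ℂ A] [CompleteSpace A] {M : Matrix n n A} :
    HasGDrazin M ↔ ∀ᶠ z in 𝓝[≠] (0 : ℂ), z ∈ resolventSet ℂ M := by
  -- The uniformity of the operator norm is definitionally the entrywise one.
  have : @CompleteSpace (Matrix n n A) PseudoMetricSpace.toUniformSpace :=
    Matrix.instCompleteSpace n n A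
  exact hasGDrazin_iff_eventually_mem_resolventSet

theorem stmt12 {A : Type*} [NormedRing A] [NormedAlgebra ℂ A] [CompleteSpace A] (a : A) :
    HasGDrazin a ↔ HasGDrazin (!![1, 1; a, 0] : Matrix (Fin 2) (Fin 2) A) := by
  have hf : HasStrictDerivAt (fun z : ℂ => z ^ 2 - z) (-1) 0 := by
    simpa using (hasStrictDerivAt_pow 2 (0 : ℂ)).fun_sub (hasStrictDerivAt_id 0)
  have hmap : Filter.map (fun z : ℂ => z ^ 2 - z) (𝓝[≠] 0) = 𝓝[≠] 0 := by
    simpa using map_nhdsNE_eq_of_hasStrictDerivAt hf (by norm_num)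
  calc HasGDrazin a
      ↔ ∀ᶠ z in 𝓝[≠] (0 : ℂ), z ∈ resolventSet ℂ a := hasGDrazin_iff_eventually_mem_resolventSet
    _ ↔ ∀ᶠ c in 𝓝[≠] (0 : ℂ), c ^ 2 - c ∈ resolventSet ℂ a := by
      nth_rw 1 [← hmap]; exact eventually_map
    _ ↔ ∀ᶠ c in 𝓝[≠] (0 : ℂ), c ∈ resolventSet ℂ !![1, 1; a, 0] := by
      simp only [mem_resolventSet_fin_two_iff]
    _ ↔ HasGDrazin !![1, 1; a, 0] := hasGDrazin_matrix_iff_eventually_mem_resolventSet.symm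
end

section
/- Let A be a complex unital Banach algebra, a, b ∈ A with a² = a. Then M = [[a,a],[b,0]] has g-Drazin inverse in M₂(A) if and only if ab has g-Drazin inverse in A. -/
open Filter Finset

/-!
By Cline's formula (`x * y` has a g-Drazin inverse iff `y * x` has one), `[[a, a], [b, 0]]` may be
replaced by `N = [[a, p], [a, 0]]` and `a * b` by `p = a * b * a`, both living over the corner ring
with unit `a`. There `N * (1 - N) = -p`.

If `N` has a g-Drazin inverse, so has the matrix `1 - N`, which is similar to `N`. The two commute,
hence their product `-p` has a g-Drazin inverse as a scalar matrix; that inverse commutes with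
everything commuting with `p`, so it is a scalar matrix too.

Conversely, suppose `N * (1 - N)` has a g-Drazin inverse, with spectral idempotent `e`. Then `N` is
invertible on the range of `1 - e`, while on the range of `e` it is idempotent up to a
quasinilpotent error `q`. The spectrum of `N` there lies in `{0, 1}`, and a quasinilpotent root of
`r = q + r²`, given by the Catalan generating function, yields the idempotent separating these two
points.
-/

section Algebra

variable {A : Type*} [Ring A] [Algebra ℂ A] {q x y z c d e : A}

theorem quasinilpotent_iff : Quasinilpotent q ↔ ∀ k ≠ 0, IsUnit (algebraMap ℂ A k - q) := by
  simp only [Quasinilpotent, spectralRadius, ENNReal.iSup_eq_zero, ENNReal.coe_eq_zero,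
    nnnorm_eq_zero, spectrum.mem_iff, not_imp_comm, ne_eq]

theorem Quasinilpotent.isUnit_one_sub (h : Quasinilpotent q) : IsUnit (1 - q) := by
  simpa only [map_one] using quasinilpotent_iff.1 h 1 one_ne_zero

theorem Quasinilpotent.neg (h : Quasinilpotent q) : Quasinilpotent (-q) := by
  rw [quasinilpotent_iff] at h ⊢
  intro k hk
  have hunit := (h (-k) (neg_ne_zero.2 hk)).neg
  rwa [map_neg, neg_sub, sub_neg_eq_add, add_comm, ← sub_neg_eq_add] at hunit

theorem Quasinilpotent.op (h : Quasinilpotent q) : Quasinilpotent (MulOpposite.op q) :=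
  quasinilpotent_iff.2 fun k hk => (quasinilpotent_iff.1 h k hk).op

theorem Quasinilpotent.mul_swap (h : Quasinilpotent (x * y)) : Quasinilpotent (y * x) := by
  rw [quasinilpotent_iff] at h ⊢
  intro k hk
  have h_unit := h k hk
  rw [← spectrum.notMem_iff] at h_unit ⊢
  rwa [← Units.val_mk0 hk, ← spectrum.unit_mem_mul_comm]

/-- If `x * y = 0` then `(k - x) * (k - y) = k * (k - (x + y))`. -/
theorem Quasinilpotent.add_of_mul_eq_zero (hx : Quasinilpotent x) (hy : Quasinilpotent y)
    (hxy : x * y = 0) : Quasinilpotent (x + y) := by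
  rw [quasinilpotent_iff] at hx hy ⊢
  intro k hk
  have hprod : (algebraMap ℂ A k - x) * (algebraMap ℂ A k - y) =
      algebraMap ℂ A k * (algebraMap ℂ A k - (x + y)) := by
    rw [mul_sub, sub_mul, sub_mul, hxy, ← Algebra.commutes k x]
    noncomm_ring
  have hk' : IsUnit (algebraMap ℂ A k) := (IsUnit.mk0 k hk).map (algebraMap ℂ A)
  rw [← hk'.mul_left_iff, ← hprod]
  exact (hx k hk).mul (hy k hk)

/-- `d` is a generalized Drazin inverse of `x`. The last condition is written so as to display the
spectral idempotent `1 - x * d`. -/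
structure IsGDrazinInverse (x d : A) : Prop where
  commute : Commute x d
  mul_mul_self : d * x * d = d
  quasinilpotent : Quasinilpotent (x * (1 - x * d))

theorem hasGDrazin_iff_exists : HasGDrazin x ↔ ∃ d, IsGDrazinInverse x d := by
  have hrem (d : A) : x - x ^ 2 * d = x * (1 - x * d) := by noncomm_ring
  simp only [HasGDrazin, hrem]
  exact exists_congr fun d =>
    ⟨fun ⟨hcomm, hd, hq⟩ => ⟨hcomm, hd.symm, hq⟩, fun ⟨hcomm, hd, hq⟩ => ⟨hcomm, hd.symm, hq⟩⟩

namespace IsGDrazinInverse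

variable (h : IsGDrazinInverse x d)
include h

theorem hasGDrazin : HasGDrazin x := hasGDrazin_iff_exists.2 ⟨d, h⟩

theorem mul_self_mul : x * d * d = d := by rw [h.commute.eq, h.mul_mul_self]

theorem mul_mul_self' : d * d * x = d := by
  rw [mul_assoc, ← h.commute.eq, ← mul_assoc, h.mul_mul_self]

theorem mul_eq_zero_of_left (hxz : x * z = 0) : d * z = 0 := by
  rw [← h.mul_mul_self', mul_assoc, hxz, mul_zero]

theorem mul_eq_zero_of_right (hzx : z * x = 0) : z * d = 0 := by
  rw [← h.mul_self_mul, mul_assoc x, ← mul_assoc, hzx, zero_mul]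

theorem isIdempotentElem : IsIdempotentElem (x * d) := by
  rw [IsIdempotentElem, mul_assoc, ← mul_assoc d, h.mul_mul_self]

end IsGDrazinInverse

theorem HasGDrazin.of_isIdempotentElem_mul (hxc : Commute x c) (hidem : IsIdempotentElem (x * c))
    (hq : Quasinilpotent (x * (1 - x * c))) : HasGDrazin x := by
  have hmul : x * (c * (x * c)) = x * c := by rw [← mul_assoc, hidem.eq]
  refine IsGDrazinInverse.hasGDrazin (d := c * (x * c)) ⟨?_, ?_, ?_⟩
  · exact hxc.mul_right ((Commute.refl x).mul_right hxc)
  · rw [mul_assoc, hmul, mul_assoc, hidem.eq]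
  · rwa [hmul]

/-- Cline's formula: if `d` is a g-Drazin inverse of `x * y`, then `y * d * d * x` is one of
`y * x`. -/
theorem HasGDrazin.mul_swap (h : HasGDrazin (x * y)) : HasGDrazin (y * x) := by
  obtain ⟨d, hd⟩ := hasGDrazin_iff_exists.1 h
  have hleft : y * x * (y * d * d * x) = y * d * x := by
    calc y * x * (y * d * d * x) = y * (x * y * d * d) * x := by noncomm_ring
      _ = y * d * x := by rw [hd.mul_self_mul]
  have hright : y * d * d * x * (y * x) = y * d * x := by
    calc y * d * d * x * (y * x) = y * (d * (d * (x * y))) * x := by noncomm_ring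
      _ = y * d * x := by rw [← hd.commute.eq, ← mul_assoc d, hd.mul_mul_self]
  refine .of_isIdempotentElem_mul (hleft.trans hright.symm) ?_ ?_
  · rw [hleft, IsIdempotentElem]
    calc y * d * x * (y * d * x) = y * (d * (x * y) * d) * x := by noncomm_ring
      _ = y * d * x := by rw [hd.mul_mul_self]
  · have hrem : y * x * (1 - y * d * x) = y * ((1 - x * y * d) * x) := by noncomm_ring
    have hswap : (1 - x * y * d) * x * y = x * y * (1 - x * y * d) := by
      calc (1 - x * y * d) * x * y = x * y - x * y * (d * (x * y)) := by noncomm_ring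
        _ = x * y * (1 - x * y * d) := by rw [← hd.commute.eq]; noncomm_ring
    rw [hleft, hrem]
    exact Quasinilpotent.mul_swap (hswap ▸ hd.quasinilpotent)

theorem hasGDrazin_mul_comm : HasGDrazin (x * y) ↔ HasGDrazin (y * x) :=
  ⟨HasGDrazin.mul_swap, HasGDrazin.mul_swap⟩

theorem HasGDrazin.neg (h : HasGDrazin x) : HasGDrazin (-x) := by
  obtain ⟨d, hd⟩ := hasGDrazin_iff_exists.1 h
  refine .of_isIdempotentElem_mul (c := -d) hd.commute.neg_left.neg_right ?_ ?_
  · rw [neg_mul_neg]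
    exact hd.isIdempotentElem
  · rw [neg_mul_neg, neg_mul]
    exact hd.quasinilpotent.neg

theorem HasGDrazin.add_of_mul_eq_zero (hx : HasGDrazin x) (hy : HasGDrazin y) (hxy : x * y = 0)
    (hyx : y * x = 0) : HasGDrazin (x + y) := by
  obtain ⟨d, hd⟩ := hasGDrazin_iff_exists.1 hx
  obtain ⟨c, hc⟩ := hasGDrazin_iff_exists.1 hy
  have hxc : x * c = 0 := hc.mul_eq_zero_of_right hxy
  have hcx : c * x = 0 := hc.mul_eq_zero_of_left hyx
  have hyd : y * d = 0 := hd.mul_eq_zero_of_right hyx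
  have hdy : d * y = 0 := hd.mul_eq_zero_of_left hxy
  have hmul : (x + y) * (d + c) = x * d + y * c := by
    rw [add_mul, mul_add, mul_add, hxc, hyd, add_zero, zero_add]
  refine .of_isIdempotentElem_mul (c := d + c) ?_ ?_ ?_
  · exact (hd.commute.add_right (hxc.trans hcx.symm)).add_left
      (Commute.add_right (hyd.trans hdy.symm) hc.commute)
  · rw [hmul]
    refine hd.isIdempotentElem.add hc.isIdempotentElem ?_
    simp only [mul_assoc, ← mul_assoc d y, ← mul_assoc c x, hdy, hcx, zero_mul, mul_zero, add_zero]
  · have hrem : (x + y) * (1 - (x * d + y * c)) = x * (1 - x * d) + y * (1 - y * c) := by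
      calc (x + y) * (1 - (x * d + y * c))
          = x * (1 - x * d) + y * (1 - y * c) - x * y * c - y * x * d := by noncomm_ring
        _ = x * (1 - x * d) + y * (1 - y * c) := by simp only [hxy, hyx, zero_mul, sub_zero]
    rw [hmul, hrem]
    refine hd.quasinilpotent.add_of_mul_eq_zero hc.quasinilpotent ?_
    calc x * (1 - x * d) * (y * (1 - y * c)) = (x * y - x * x * (d * y)) * (1 - y * c) := by
          noncomm_ring
      _ = 0 := by rw [hxy, hdy, mul_zero, sub_zero, zero_mul]

theorem HasGDrazin.of_mul_isIdempotentElem (he : IsIdempotentElem e) (hxe : Commute x e)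
    (h : HasGDrazin (x * (1 - e))) (h' : HasGDrazin (x * e)) : HasGDrazin x := by
  have hx1e : Commute x (1 - e) := (Commute.one_right x).sub_right hxe
  have hsum : x * (1 - e) + x * e = x := by noncomm_ring
  rw [← hsum]
  refine h.add_of_mul_eq_zero h' ?_ ?_
  · rw [hx1e.symm.mul_mul_mul_comm, he.one_sub_mul_self, mul_zero]
  · rw [hxe.symm.mul_mul_mul_comm, he.mul_one_sub_self, mul_zero]

theorem HasGDrazin.of_mul_eq_isIdempotentElem (he : IsIdempotentElem e) (hxe : Commute x e)
    (hxc : Commute x c) (hec : Commute e c) (hmul : x * c = e) : HasGDrazin (x * e) := by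
  have hinv : x * e * c = e := by rw [hxe.eq, mul_assoc, hmul, he.eq]
  refine .of_isIdempotentElem_mul (hxc.mul_left hec) ?_ ?_
  · rwa [hinv]
  · rw [hinv, mul_assoc, he.mul_one_sub_self, mul_zero]
    exact spectrum.spectralRadius_zero

end Algebra

section Banach

variable {A : Type*} [NormedRing A] [NormedAlgebra ℂ A] [CompleteSpace A] {q w x y z c d : A}

theorem Quasinilpotent.summable_norm_pow_mul_pow (h : Quasinilpotent q) (C : ℝ) :
    Summable fun n : ℕ => ‖q ^ n‖ * C ^ n := by
  have hlim := spectrum.pow_norm_pow_one_div_tendsto_nhds_spectralRadius q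
  rw [show spectralRadius ℂ q = 0 from h] at hlim
  obtain ⟨ε, hε, hεC⟩ : ∃ ε > 0, ε * |C| ≤ 1 / 2 :=
    ⟨1 / (2 * (|C| + 1)), by positivity, by
      rw [div_mul_eq_mul_div, div_le_div_iff₀ (by positivity) (by norm_num)]; linarith⟩
  refine .of_norm_bounded_eventually_nat summable_geometric_two ?_
  filter_upwards [hlim.eventually_lt_const (ENNReal.ofReal_pos.2 hε), eventually_ne_atTop 0]
    with n hroot hn
  have hpow : ‖q ^ n‖ ≤ ε ^ n := by
    calc ‖q ^ n‖ = (‖q ^ n‖ ^ (1 / n : ℝ)) ^ n := by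
          rw [one_div, Real.rpow_inv_natCast_pow (norm_nonneg _) hn]
      _ ≤ ε ^ n := by gcongr; exact ((ENNReal.ofReal_lt_ofReal_iff hε).1 hroot).le
  calc ‖‖q ^ n‖ * C ^ n‖ = ‖q ^ n‖ * |C| ^ n := by simp
    _ ≤ ε ^ n * |C| ^ n := by gcongr
    _ = (ε * |C|) ^ n := (mul_pow _ _ _).symm
    _ ≤ (1 / 2) ^ n := by gcongr

theorem quasinilpotent_iff_summable :
    Quasinilpotent q ↔ ∀ C : ℝ, Summable fun n : ℕ => ‖q ^ n‖ * C ^ n := by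
  refine ⟨Quasinilpotent.summable_norm_pow_mul_pow, fun h => quasinilpotent_iff.2 fun k hk => ?_⟩
  have hsum : Summable fun n : ℕ => (k⁻¹ • q) ^ n := by
    refine .of_norm ((h ‖k⁻¹‖).congr fun n => ?_)
    rw [smul_pow, norm_smul, norm_pow k⁻¹, mul_comm]
  have hunit : IsUnit (1 - k⁻¹ • q) :=
    isUnit_iff_exists.2 ⟨_, hsum.one_sub_mul_tsum_pow, hsum.tsum_pow_mul_one_sub⟩
  have hfactor : algebraMap ℂ A k - q = algebraMap ℂ A k * (1 - k⁻¹ • q) := by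
    rw [← Algebra.smul_def, smul_sub, smul_inv_smul₀ hk, Algebra.algebraMap_eq_smul_one]
  rw [hfactor]
  exact ((IsUnit.mk0 k hk).map (algebraMap ℂ A)).mul hunit

theorem Quasinilpotent.mul_right (h : Quasinilpotent q) (hc : Commute q c) :
    Quasinilpotent (q * c) := by
  refine quasinilpotent_iff_summable.2 fun C => .of_norm_bounded_eventually_nat
    (h.summable_norm_pow_mul_pow (‖c‖ * |C|)) ?_
  filter_upwards [eventually_gt_atTop 0] with n hn
  calc ‖‖(q * c) ^ n‖ * C ^ n‖ = ‖q ^ n * c ^ n‖ * |C| ^ n := by simp [hc.mul_pow]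
    _ ≤ ‖q ^ n‖ * ‖c‖ ^ n * |C| ^ n := by
      gcongr
      exact (norm_mul_le _ _).trans (by gcongr; exact norm_pow_le' c hn)
    _ = ‖q ^ n‖ * (‖c‖ * |C|) ^ n := by rw [mul_pow, mul_assoc]

theorem Quasinilpotent.eq_zero_of_mul_mul_eq_self (h : Quasinilpotent q) (hw : q * w * d = w) :
    w = 0 := by
  have hiter (n : ℕ) : q ^ n * w * d ^ n = w := by
    induction n with
    | zero => simp
    | succ n ih =>
      calc q ^ (n + 1) * w * d ^ (n + 1) = q ^ n * (q * w * d) * d ^ n := by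
            rw [pow_succ, pow_succ']; noncomm_ring
        _ = w := by rw [hw, ih]
  have hlim := (h.summable_norm_pow_mul_pow ‖d‖).tendsto_atTop_zero.mul_const ‖w‖
  rw [zero_mul] at hlim
  refine norm_le_zero_iff.1 (ge_of_tendsto hlim ?_)
  filter_upwards [eventually_gt_atTop 0] with n hn
  calc ‖w‖ = ‖q ^ n * w * d ^ n‖ := by rw [hiter]
    _ ≤ ‖q ^ n‖ * ‖w‖ * ‖d ^ n‖ := norm_mul₃_le
    _ ≤ ‖q ^ n‖ * ‖w‖ * ‖d‖ ^ n := by gcongr; exact norm_pow_le' d hn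
    _ = ‖q ^ n‖ * ‖d‖ ^ n * ‖w‖ := by ring

theorem Quasinilpotent.eq_zero_of_mul_mul_eq_self' (h : Quasinilpotent q) (hw : d * w * q = w) :
    w = 0 := by
  refine MulOpposite.op_injective (h.op.eq_zero_of_mul_mul_eq_self (d := MulOpposite.op d) ?_)
  rw [← MulOpposite.op_mul, ← MulOpposite.op_mul, ← mul_assoc, hw]

/-- With `p = x * d` and `e = 1 - p`, both `w = e * z * p` and `w = p * z * e` vanish, because
`x * e * w * d = w` and `d * w * (x * e) = w` respectively. -/
theorem IsGDrazinInverse.commute_of_commute (h : IsGDrazinInverse x d) (hz : Commute z x) :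
    Commute z d := by
  obtain ⟨p, hp⟩ : ∃ p, p = x * d := ⟨_, rfl⟩
  obtain ⟨e, he⟩ : ∃ e, e = 1 - p := ⟨_, rfl⟩
  have hee : e * e = e := by rw [he, hp]; exact h.isIdempotentElem.one_sub
  have hxe : Commute x e := by
    rw [he, hp]
    exact (Commute.one_right x).sub_right ((Commute.refl x).mul_right h.commute)
  have hq : Quasinilpotent (x * e) := by rw [he, hp]; exact h.quasinilpotent
  have hpd : p * d = d := hp ▸ h.mul_self_mul
  have hdp : d * p = d := by rw [hp, ← mul_assoc, h.mul_mul_self]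
  have hpx : p = d * x := hp.trans h.commute
  have hezp : e * z * p = 0 := by
    apply hq.eq_zero_of_mul_mul_eq_self (d := d)
    calc x * e * (e * z * p) * d = x * (e * e) * z * (p * d) := by noncomm_ring
      _ = e * (x * z) * d := by rw [hee, hpd, hxe.eq, mul_assoc e]
      _ = e * z * p := by rw [← hz.eq, hp]; noncomm_ring
  have hpze : p * z * e = 0 := by
    apply hq.eq_zero_of_mul_mul_eq_self' (d := d)
    calc d * (p * z * e) * (x * e) = d * p * z * (e * x) * e := by noncomm_ring
      _ = d * (z * x) * (e * e) := by rw [hdp, ← hxe.eq]; noncomm_ring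
      _ = p * z * e := by rw [hee, hz.eq, hpx]; noncomm_ring
  have hzp : Commute z p := by
    rw [he, sub_mul, sub_mul, one_mul, sub_eq_zero] at hezp
    rw [he, mul_sub, mul_one, sub_eq_zero] at hpze
    exact hezp.trans hpze.symm
  calc z * d = z * p * d := by rw [mul_assoc, hpd]
    _ = d * (x * z) * d := by rw [hzp.eq, hpx]; noncomm_ring
    _ = d * (z * p) := by rw [← hz.eq, hp]; noncomm_ring
    _ = d * z := by rw [hzp.eq, ← mul_assoc, hdp]

theorem Quasinilpotent.mul_mul_one_sub_mul {p r : A} (hp : IsIdempotentElem p) (hxy : Commute x y)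
    (hxp : Commute x p) (hyp : Commute y p) (hxr : Commute x r) (hpr : Commute p r)
    (hx : Quasinilpotent (x * (1 - p))) (hy : Quasinilpotent (y * (1 - r))) :
    Quasinilpotent (x * y * (1 - p * r)) := by
  have hcommx : Commute (x * (1 - p)) y :=
    hxy.mul_left ((Commute.one_left y).sub_left hyp.symm)
  have hcommy : Commute (y * (1 - r)) (x * p) :=
    (hxy.symm.mul_right hyp).mul_left
      ((Commute.one_left _).sub_left (hxr.symm.mul_right hpr.symm))
  have hzero : y * (1 - r) * (x * p) * (x * (1 - p) * y) = 0 := by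
    calc y * (1 - r) * (x * p) * (x * (1 - p) * y)
        = y * (1 - r) * x * (p * x) * (1 - p) * y := by noncomm_ring
      _ = y * (1 - r) * x * x * (p * (1 - p)) * y := by rw [← hxp.eq]; noncomm_ring
      _ = 0 := by rw [hp.mul_one_sub_self, mul_zero, zero_mul]
  have hsplit : x * y * (1 - p * r) = y * (1 - r) * (x * p) + x * (1 - p) * y := by
    calc x * y * (1 - p * r) = x * y - x * (y * p) * r := by noncomm_ring
      _ = x * p * (y * (1 - r)) + x * (1 - p) * y := by rw [hyp.eq]; noncomm_ring
      _ = _ := by rw [hcommy.eq]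
  rw [hsplit]
  exact (hy.mul_right hcommy).add_of_mul_eq_zero (hx.mul_right hcommx) hzero

theorem HasGDrazin.mul (hx : HasGDrazin x) (hy : HasGDrazin y) (hxy : Commute x y) :
    HasGDrazin (x * y) := by
  obtain ⟨d, hd⟩ := hasGDrazin_iff_exists.1 hx
  obtain ⟨c, hc⟩ := hasGDrazin_iff_exists.1 hy
  have hyd : Commute y d := hd.commute_of_commute hxy.symm
  have hxc : Commute x c := hc.commute_of_commute hxy
  have hdc : Commute d c := hc.commute_of_commute hyd.symm
  have hxp : Commute x (x * d) := (Commute.refl x).mul_right hd.commute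
  have hyp : Commute y (x * d) := hxy.symm.mul_right hyd
  have hxr : Commute x (y * c) := hxy.mul_right hxc
  have hpr : Commute (x * d) (y * c) := hxr.mul_left (hyd.symm.mul_right hdc)
  have hmul : x * y * (d * c) = x * d * (y * c) := hyd.mul_mul_mul_comm x c
  refine .of_isIdempotentElem_mul (c := d * c) ?_ ?_ ?_
  · exact (hd.commute.mul_right hxc).mul_left (hyd.mul_right hc.commute)
  · rw [hmul]
    exact hd.isIdempotentElem.mul_of_commute hpr hc.isIdempotentElem
  · rw [hmul]
    exact .mul_mul_one_sub_mul hd.isIdempotentElem hxy hxp hyp hxr hpr hd.quasinilpotent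
      hc.quasinilpotent

theorem catalan_le_four_pow (n : ℕ) : catalan n ≤ 4 ^ n := by
  calc catalan n ≤ (n + 1) * catalan n := Nat.le_mul_of_pos_left _ n.succ_pos
    _ = n.centralBinom := succ_mul_catalan_eq_centralBinom n
    _ ≤ 4 ^ n := n.centralBinom_le_four_pow

theorem Quasinilpotent.summable_norm_catalan_smul_pow (h : Quasinilpotent q) :
    Summable fun n => ‖catalan n • q ^ n‖ := by
  refine (h.summable_norm_pow_mul_pow 4).of_nonneg_of_le (fun _ => norm_nonneg _) fun n => ?_
  have hcat : (catalan n : ℝ) ≤ 4 ^ n := by exact_mod_cast catalan_le_four_pow n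
  calc ‖catalan n • q ^ n‖ ≤ catalan n * ‖q ^ n‖ := norm_nsmul_le
    _ ≤ 4 ^ n * ‖q ^ n‖ := by gcongr
    _ = ‖q ^ n‖ * 4 ^ n := mul_comm _ _

theorem Quasinilpotent.tsum_catalan_smul_pow (h : Quasinilpotent q) :
    ∑' n, catalan n • q ^ n =
      1 + q * ((∑' n, catalan n • q ^ n) * ∑' n, catalan n • q ^ n) := by
  have hsum := h.summable_norm_catalan_smul_pow
  conv_lhs => rw [hsum.of_norm.tsum_eq_zero_add, catalan_zero, one_smul, pow_zero]
  rw [tsum_mul_tsum_eq_tsum_sum_antidiagonal_of_summable_norm hsum hsum,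
    ← (summable_norm_sum_mul_antidiagonal_of_summable_norm hsum hsum).of_norm.tsum_mul_left]
  refine congrArg (1 + ·) (tsum_congr fun n => ?_)
  rw [catalan_succ', sum_smul, mul_sum]
  refine sum_congr rfl fun ij hij => ?_
  rw [← mem_antidiagonal.1 hij, smul_mul_smul_comm, mul_smul_comm, ← pow_add, ← pow_succ']

theorem Quasinilpotent.exists_eq_add_mul_self (h : Quasinilpotent q) :
    ∃ r : A, Quasinilpotent r ∧ r = q + r * r ∧ ∀ z, Commute z q → Commute z r := by
  obtain ⟨c, hc⟩ : ∃ c, c = ∑' n, catalan n • q ^ n := ⟨_, rfl⟩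
  have hcomm (z : A) (hz : Commute z q) : Commute z c := by
    rw [hc]
    exact .tsum_right _ fun n => (hz.pow_right n).smul_right _
  have hqc : Commute q c := hcomm q (Commute.refl q)
  have hroot : c = 1 + q * (c * c) := hc ▸ h.tsum_catalan_smul_pow
  refine ⟨q * c, h.mul_right hqc, ?_, fun z hz => hz.mul_right (hcomm z hz)⟩
  calc q * c = q * (1 + q * (c * c)) := by rw [← hroot]
    _ = q + q * q * (c * c) := by noncomm_ring
    _ = q + q * c * (q * c) := by rw [hqc.mul_mul_mul_comm]

theorem Quasinilpotent.exists_isIdempotentElem_sub (h : Quasinilpotent (x * (1 - x))) :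
    ∃ f : A, IsIdempotentElem f ∧ Commute f x ∧ Quasinilpotent (x - f) := by
  obtain ⟨r, hr, hroot, hcomm⟩ := h.exists_eq_add_mul_self
  have hxr : Commute x r :=
    hcomm x ((Commute.refl x).mul_right ((Commute.one_right x).sub_right (Commute.refl x)))
  obtain ⟨u, hu⟩ := (hr.mul_right (Commute.ofNat_right r 2)).isUnit_one_sub
  have hu_inv {z : A} (hz : Commute z r) : Commute z (↑u⁻¹ : A) := by
    refine Commute.units_inv_right ?_
    rw [hu]
    exact (Commute.one_right z).sub_right (hz.mul_right (Commute.ofNat_right z 2))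
  have hxu := hu_inv hxr
  have hru := hu_inv (Commute.refl r)
  have hsq : (x - r) * (x - r) = (x - r) * u := by
    have hdiff : (x - r) * (x - r) - (x - r) * (1 - r * 2) =
        r - (x * (1 - x) + r * r) + (x * r - r * x) := by noncomm_ring
    rw [← sub_eq_zero, hu, hdiff, ← hroot, hxr.eq, sub_self, sub_self, add_zero]
  obtain ⟨f, hf⟩ : ∃ f, f = (x - r) * (↑u⁻¹ : A) := ⟨_, rfl⟩
  have hfu : f * u = x - r := by rw [hf, Units.inv_mul_cancel_right]
  have hrf : Commute r f := hf ▸ (hxr.symm.sub_right (Commute.refl r)).mul_right hru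
  refine ⟨f, ?_, ?_, ?_⟩
  · calc f * f = (x - r) * (x - r) * ↑u⁻¹ * ↑u⁻¹ := by
          rw [hf, (hxu.sub_left hru).symm.mul_mul_mul_comm, mul_assoc _ (↑u⁻¹ : A)]
      _ = f := by rw [hsq, Units.mul_inv_cancel_right, hf]
  · exact (hf ▸ ((Commute.refl x).sub_right hxr).mul_right hxu).symm
  · have hrem : x - f = r * (1 - 2 * f) := by
      calc x - f = f * u + r - f := by rw [hfu, sub_add_cancel]
        _ = r - f * r * 2 := by rw [hu]; noncomm_ring
        _ = r * (1 - 2 * f) := by rw [← hrf.eq]; noncomm_ring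
    rw [hrem]
    exact hr.mul_right ((Commute.one_right r).sub_right ((Commute.ofNat_right r 2).mul_right hrf))

theorem HasGDrazin.of_isIdempotentElem_quasinilpotent_sub (hf : IsIdempotentElem c)
    (hfx : Commute c x) (hq : Quasinilpotent (x - c)) : HasGDrazin x := by
  obtain ⟨u, hu⟩ := hq.neg.isUnit_one_sub
  have hinv {z : A} (hzf : Commute z c) (hzx : Commute z x) : Commute z (↑u⁻¹ : A) := by
    refine Commute.units_inv_right ?_
    rw [hu]
    exact (Commute.one_right z).sub_right (hzx.sub_right hzf).neg_right
  have hmul : x * (c * ↑u⁻¹) = c := by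
    have hxf : x * c = c * u := by
      rw [hu, sub_neg_eq_add, mul_add, mul_sub, hf.eq, mul_one, add_sub_cancel, hfx.eq]
    rw [← mul_assoc, hxf, Units.mul_inv_cancel_right]
  refine .of_isIdempotentElem_mul (c := c * ↑u⁻¹) ?_ ?_ ?_
  · exact hfx.symm.mul_right (hinv hfx.symm (Commute.refl x))
  · rwa [hmul]
  · have hrem : x * (1 - c) = (x - c) * (1 - c) := by
      rw [sub_mul, mul_sub c, hf.eq, mul_one, sub_self, sub_zero]
    rw [hmul, hrem]
    exact hq.mul_right ((Commute.one_right _).sub_right (hfx.symm.sub_left (Commute.refl c)))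

theorem HasGDrazin.of_quasinilpotent_mul_one_sub (h : Quasinilpotent (x * (1 - x))) :
    HasGDrazin x := by
  obtain ⟨f, hff, hfx, hq⟩ := h.exists_isIdempotentElem_sub
  exact .of_isIdempotentElem_quasinilpotent_sub hff hfx hq

theorem HasGDrazin.of_mul_one_sub (h : HasGDrazin (x * (1 - x))) : HasGDrazin x := by
  obtain ⟨d, hd⟩ := hasGDrazin_iff_exists.1 h
  have hx1 : Commute x (1 - x) := (Commute.one_right x).sub_right (Commute.refl x)
  have hxp : Commute x (x * (1 - x)) := (Commute.refl x).mul_right hx1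
  have hxd : Commute x d := hd.commute_of_commute hxp
  obtain ⟨e, he⟩ : ∃ e, e = x * (1 - x) * d := ⟨_, rfl⟩
  have hee : IsIdempotentElem e := he ▸ hd.isIdempotentElem
  have hxe : Commute x e := he ▸ hxp.mul_right hxd
  have hed : Commute e d := he ▸ hd.commute.mul_left (Commute.refl d)
  have hx1e : Commute x (1 - e) := (Commute.one_right x).sub_right hxe
  refine .of_mul_isIdempotentElem hee hxe ?_ (.of_mul_eq_isIdempotentElem hee hxe
    (c := (1 - x) * d) (hx1.mul_right hxd)
    (((Commute.one_right e).sub_right hxe.symm).mul_right hed) ?_)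
  · have hsplit : x * (1 - e) * (1 - x * (1 - e)) = x * (1 - x) * (1 - e) := by
      calc x * (1 - e) * (1 - x * (1 - e)) = x * (1 - e) - x * ((1 - e) * x) * (1 - e) := by
            noncomm_ring
        _ = x * (1 - e) - x * x * ((1 - e) * (1 - e)) := by rw [← hx1e.eq]; noncomm_ring
        _ = x * (1 - x) * (1 - e) := by rw [hee.one_sub.eq]; noncomm_ring
    apply HasGDrazin.of_quasinilpotent_mul_one_sub
    rw [hsplit, he]
    exact hd.quasinilpotent
  · rw [he, mul_assoc]

end Banach

section Matrix

variable {n A : Type*} [Fintype n] [DecidableEq n]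

theorem isUnit_scalar_iff [Nonempty n] [Ring A] {x : A} :
    IsUnit (Matrix.scalar n x) ↔ IsUnit x := by
  refine ⟨fun h => ?_, fun h => h.map (Matrix.scalar n)⟩
  obtain ⟨Z, hxZ, hZx⟩ := isUnit_iff_exists.1 h
  obtain ⟨i⟩ := ‹Nonempty n›
  exact isUnit_iff_exists.2 ⟨Z i i, by simpa using congrFun₂ hxZ i i,
    by simpa using congrFun₂ hZx i i⟩

theorem quasinilpotent_scalar_iff [Nonempty n] [Ring A] [Algebra ℂ A] {x : A} :
    Quasinilpotent (Matrix.scalar n x) ↔ Quasinilpotent x := by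
  have hsub (k : ℂ) : algebraMap ℂ (Matrix n n A) k - Matrix.scalar n x =
      Matrix.scalar n (algebraMap ℂ A k - x) := by
    rw [map_sub]
    rfl
  simp only [quasinilpotent_iff, hsub, isUnit_scalar_iff]

theorem isGDrazinInverse_scalar_iff [Nonempty n] [Ring A] [Algebra ℂ A] {x d : A} :
    IsGDrazinInverse (Matrix.scalar n x) (Matrix.scalar n d) ↔ IsGDrazinInverse x d := by
  constructor
  · rintro ⟨hcomm, hd, hq⟩
    refine ⟨hcomm.of_map fun _ _ => Matrix.scalar_inj.1, ?_, ?_⟩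
    · simpa only [← map_mul, Matrix.scalar_inj] using hd
    · simpa only [← map_mul, ← map_one (Matrix.scalar n), ← map_sub,
        quasinilpotent_scalar_iff] using hq
  · rintro ⟨hcomm, hd, hq⟩
    refine ⟨hcomm.map (Matrix.scalar n), ?_, ?_⟩
    · rw [← map_mul, ← map_mul, hd]
    · simpa only [← map_mul, ← map_one (Matrix.scalar n), ← map_sub,
        quasinilpotent_scalar_iff] using hq

theorem completeSpace_matrix_linftyOp [NormedRing A] [CompleteSpace A] :
    @CompleteSpace (Matrix n n A)
      (Matrix.linftyOpNormedRing (n := n) (α := A)).toPseudoMetricSpace.toUniformSpace :=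
  inferInstanceAs (CompleteSpace (n → n → A))

open scoped Matrix.Norms.Operator in
theorem hasGDrazin_scalar_iff [Nonempty n] [NormedRing A] [NormedAlgebra ℂ A] [CompleteSpace A]
    {x : A} : HasGDrazin (Matrix.scalar n x) ↔ HasGDrazin x := by
  have := completeSpace_matrix_linftyOp (n := n) (A := A)
  simp only [hasGDrazin_iff_exists]
  refine ⟨fun ⟨D, hD⟩ => ?_, fun ⟨d, hd⟩ => ⟨_, isGDrazinInverse_scalar_iff.2 hd⟩⟩
  obtain ⟨d, rfl⟩ := Matrix.mem_range_scalar_of_commute_single fun i j _ =>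
    hD.commute_of_commute (Matrix.mem_range_scalar_iff_commute_single'.1 ⟨x, rfl⟩ i j)
  exact ⟨d, isGDrazinInverse_scalar_iff.1 hD⟩

end Matrix

section FinTwo

variable {A : Type*} {a p : A}

theorem HasGDrazin.scalar_sub_companion [Ring A] [Algebra ℂ A]
    (h : HasGDrazin (!![a, p; a, 0] : Matrix (Fin 2) (Fin 2) A)) :
    HasGDrazin (Matrix.scalar (Fin 2) a - !![a, p; a, 0]) := by
  have hS : (!![1, -1; 0, -1] : Matrix (Fin 2) (Fin 2) A) * !![1, -1; 0, -1] = 1 := by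
    simp [Matrix.one_fin_two]
  have hconj : (!![1, -1; 0, -1] : Matrix (Fin 2) (Fin 2) A) *
      (!![a, p; a, 0] * !![1, -1; 0, -1]) = Matrix.scalar (Fin 2) a - !![a, p; a, 0] := by
    ext i j
    fin_cases i <;> fin_cases j <;> simp
  rw [← hconj]
  apply HasGDrazin.mul_swap
  rwa [mul_assoc, hS, mul_one]

theorem companion_mul_scalar_sub [Ring A] (hap : a * p = p) (hpa : p * a = p) :
    !![a, p; a, 0] * (Matrix.scalar (Fin 2) a - !![a, p; a, 0]) = -Matrix.scalar (Fin 2) p := by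
  ext i j
  fin_cases i <;> fin_cases j <;> simp [hap, hpa, mul_sub, Matrix.mul_apply]

theorem companion_mul_one_sub [Ring A] (ha : a * a = a) (hap : a * p = p) (hpa : p * a = p) :
    !![a, p; a, 0] * (1 - !![a, p; a, 0]) = -Matrix.scalar (Fin 2) p := by
  ext i j
  fin_cases i <;> fin_cases j <;> simp [ha, hap, hpa, mul_sub]

open scoped Matrix.Norms.Operator in
theorem hasGDrazin_companion_iff [NormedRing A] [NormedAlgebra ℂ A] [CompleteSpace A]
    (ha : a * a = a) (hap : a * p = p) (hpa : p * a = p) :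
    HasGDrazin (!![a, p; a, 0] : Matrix (Fin 2) (Fin 2) A) ↔ HasGDrazin p := by
  have := completeSpace_matrix_linftyOp (n := Fin 2) (A := A)
  constructor
  · intro h
    have hcomm : Commute !![a, p; a, 0] (Matrix.scalar (Fin 2) a - !![a, p; a, 0]) := by
      refine Commute.sub_right ?_ (Commute.refl _)
      ext i j
      fin_cases i <;> fin_cases j <;> simp [hap, hpa]
    have hprod := (h.mul h.scalar_sub_companion hcomm).neg
    rw [companion_mul_scalar_sub hap hpa, neg_neg] at hprod
    exact hasGDrazin_scalar_iff.1 hprod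
  · intro h
    apply HasGDrazin.of_mul_one_sub
    rw [companion_mul_one_sub ha hap hpa]
    exact (hasGDrazin_scalar_iff.2 h).neg

end FinTwo

theorem stmt14 {A : Type*} [NormedRing A] [NormedAlgebra ℂ A] [CompleteSpace A]
    (a b : A) (ha : a * a = a) :
    HasGDrazin (!![a, a; b, 0] : Matrix (Fin 2) (Fin 2) A) ↔ HasGDrazin (a * b) := by
  have haab : a * (a * b) = a * b := by rw [← mul_assoc, ha]
  have hM : (!![a, a; b, 0] : Matrix (Fin 2) (Fin 2) A) = !![a, 0; 0, b] * !![a, a; 1, 0] := by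
    simp [ha]
  have hswap : (!![a, a; 1, 0] * !![a, 0; 0, b] : Matrix (Fin 2) (Fin 2) A) =
      !![a, 0; 0, a] * !![a, a * b; a, 0] := by
    simp [ha, haab]
  have hcorner : (!![a, a * b; a, 0] * !![a, 0; 0, a] : Matrix (Fin 2) (Fin 2) A) =
      !![a, a * b * a; a, 0] := by
    simp [ha]
  rw [hM, hasGDrazin_mul_comm, hswap, hasGDrazin_mul_comm, hcorner,
    hasGDrazin_companion_iff ha (by rw [← mul_assoc, haab]) (by rw [mul_assoc _ a, ha]),
    hasGDrazin_mul_comm, haab]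
end
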